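/- Let C be a braided category with braiding σ, and let x be a transparent object of C admitting a right dual x^∨ (an exact pairing with coevaluation 𝟙 ⟶ x ⊗ x^∨ and evaluation x^∨ ⊗ x ⟶ 𝟙). Then x^∨ is transparent: for every object y, the double braiding σ_{y,x^∨} ∘ σ_{x^∨,y} is the identity of x^∨ ⊗ y. -/

import Mathlib

open CategoryTheory MonoidalCategory

/-- An object `x` of a braided category is transparent (lies in the Müger center) if the
double braiding with every object `y` is the identity. -/
def Transparent {C : Type*} [Category C] [MonoidalCategory C] [BraidedCategory C]
    (x : C) : Prop :=
  ∀ y : C, (β_ x y).hom ≫ (β_ y x).hom = 𝟙 (x ⊗ y)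

/-!
For fixed `y`, sliding the evaluation `ε : xd ⊗ x ⟶ 𝟙_ C` through the strand `y` shows that
`(β_ xd y).hom` is the mate of `(β_ x y).inv`, and `(β_ y xd).inv` the mate of `(β_ y x).hom`.
Taking mates is injective, so `(β_ y x).hom = (β_ x y).inv` if and only if
`(β_ y xd).inv = (β_ xd y).hom`, and these are the triviality of the two double braidings.
-/

section Mate

variable {C : Type*} [Category C] [MonoidalCategory C]

/-- The mate of a morphism `y ⊗ x ⟶ x' ⊗ z` under right duality: the morphism
`xd' ⊗ y ⟶ z ⊗ xd` obtained by bending the strands of `x'` and `x`. The right duals are given by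
exact pairings, not by chosen duals. -/
def rightDualMateEquiv (x xd x' xd' y z : C) [ExactPairing x xd] [ExactPairing x' xd'] :
    (y ⊗ x ⟶ x' ⊗ z) ≃ (xd' ⊗ y ⟶ z ⊗ xd) :=
  (tensorLeftHomEquiv (y ⊗ x) x' xd' z).symm.trans <|
    (α_ xd' y x).symm.homFromEquiv.trans <| tensorRightHomEquiv (xd' ⊗ y) x xd z

theorem rightDualMateEquiv_apply_eq_iff {x xd x' xd' y z : C}
    [ExactPairing x xd] [ExactPairing x' xd'] (f : y ⊗ x ⟶ x' ⊗ z) (g : xd' ⊗ y ⟶ z ⊗ xd) :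
    rightDualMateEquiv x xd x' xd' y z f = g ↔
      g ▷ x ≫ (α_ z xd x).hom ≫ z ◁ ε_ x xd ≫ (ρ_ z).hom =
        (α_ xd' y x).hom ≫ xd' ◁ f ≫ (α_ xd' x' z).inv ≫ ε_ x' xd' ▷ z ≫ (λ_ z).hom :=
  (tensorRightHomEquiv (xd' ⊗ y) x xd z).eq_symm_apply.symm.trans eq_comm

end Mate

section Braided

variable {C : Type*} [Category C] [MonoidalCategory C] [BraidedCategory C]

theorem braiding_hom_whiskerRight_comp_pairing {a b : C} (p : a ⊗ b ⟶ 𝟙_ C) (y : C) :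
    (β_ a y).hom ▷ b ≫ (α_ y a b).hom ≫ y ◁ p ≫ (ρ_ y).hom =
      (α_ a y b).hom ≫ a ◁ (β_ b y).inv ≫ (α_ a b y).inv ≫ p ▷ y ≫ (λ_ y).hom := by
  have slide : p ▷ y ≫ (λ_ y).hom = (β_ (a ⊗ b) y).hom ≫ y ◁ p ≫ (ρ_ y).hom := by
    rw [← BraidedCategory.braiding_naturality_left_assoc, braiding_rightUnitor]
  rw [slide, BraidedCategory.braiding_tensor_left_hom]
  simp

theorem braiding_inv_whiskerRight_comp_pairing {a b : C} (p : a ⊗ b ⟶ 𝟙_ C) (y : C) :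
    (β_ y a).inv ▷ b ≫ (α_ y a b).hom ≫ y ◁ p ≫ (ρ_ y).hom =
      (α_ a y b).hom ≫ a ◁ (β_ y b).hom ≫ (α_ a b y).inv ≫ p ▷ y ≫ (λ_ y).hom := by
  have slide : p ▷ y ≫ (λ_ y).hom = (β_ y (a ⊗ b)).inv ≫ y ◁ p ≫ (ρ_ y).hom := by
    rw [← BraidedCategory.braiding_inv_naturality_left_assoc, braiding_inv_tensorUnit_right]
    simp
  rw [slide, BraidedCategory.braiding_tensor_right_inv]
  simp

theorem rightDualMateEquiv_braiding_inv (x xd y : C) [ExactPairing x xd] :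
    rightDualMateEquiv x xd x xd y y (β_ x y).inv = (β_ xd y).hom :=
  (rightDualMateEquiv_apply_eq_iff _ _).2 (braiding_hom_whiskerRight_comp_pairing (ε_ x xd) y)

theorem rightDualMateEquiv_braiding_hom (x xd y : C) [ExactPairing x xd] :
    rightDualMateEquiv x xd x xd y y (β_ y x).hom = (β_ y xd).inv :=
  (rightDualMateEquiv_apply_eq_iff _ _).2 (braiding_inv_whiskerRight_comp_pairing (ε_ x xd) y)

theorem transparent_of_rightDual_general (x xd y : C) [ExactPairing x xd] :
    (β_ x y).hom ≫ (β_ y x).hom = 𝟙 (x ⊗ y) ↔ (β_ xd y).hom ≫ (β_ y xd).hom = 𝟙 (xd ⊗ y) :=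
  calc
    (β_ x y).hom ≫ (β_ y x).hom = 𝟙 (x ⊗ y)
      ↔ (β_ y x).hom = (β_ x y).inv := Iso.hom_comp_eq_id _
    _ ↔ (β_ y xd).inv = (β_ xd y).hom := by
      rw [← rightDualMateEquiv_braiding_hom x xd, ← rightDualMateEquiv_braiding_inv x xd,
        (rightDualMateEquiv x xd x xd y y).apply_eq_iff_eq]
    _ ↔ (β_ xd y).hom ≫ (β_ y xd).hom = 𝟙 (xd ⊗ y) :=
      eq_comm.trans (Iso.comp_hom_eq_id _).symm

end Braided

/-- If `x` is a transparent object of a braided category and `xd` is a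
right dual of `x` (an exact pairing with coevaluation `𝟙 ⟶ x ⊗ xd` and evaluation
`xd ⊗ x ⟶ 𝟙`), then `xd` is transparent. -/
theorem transparent_of_rightDual
    {C : Type*} [Category C] [MonoidalCategory C] [BraidedCategory C]
    (x xd : C) [ExactPairing x xd] (hx : Transparent x) :
    Transparent xd :=
  fun y ↦ (transparent_of_rightDual_general x xd y).1 (hx y)
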